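/- Fix an integer d ≥ 1, a viscosity parameter ϰ > 0, and β > 0; set c := √(β/(8ϰ)) and Q_s(a) := e^{−βs/2 + c‖a‖} · p_s(a) for s > 0 and a ∈ ℝ^d. Then (Q_s * Q_s)(a) ≤ 2^d · p_{4s}(a) for all s > 0 and a ∈ ℝ^d, and consequently, for every measurable f: ℝ^d → [0,∞], ∫_0^∞ e^{−βs} (Q_s * Q_s * f)(0) ds ≤ 2^{d−2} · ∫_0^∞ e^{−βt/4} (p_t * f)(0) dt. -/

import Mathlib

open MeasureTheory Real
open scoped ENNReal

/-- The heat kernel for `(ϰ/2)Δ` on `ℝ^d`. -/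
noncomputable def heatKernel (d : ℕ) (ϰ : ℝ) (t : ℝ) (z : EuclideanSpace ℝ (Fin d)) : ℝ :=
  (2 * π * ϰ * t) ^ (-(d : ℝ) / 2) * Real.exp (-‖z‖ ^ 2 / (2 * ϰ * t))

/-- `Q_s(a) = e^{-βs/2 + √(β/(8ϰ))‖a‖} p_s(a)`. -/
noncomputable def Qker (d : ℕ) (ϰ β : ℝ) (s : ℝ) (a : EuclideanSpace ℝ (Fin d)) : ℝ :=
  Real.exp (-(β * s) / 2 + Real.sqrt (β / (8 * ϰ)) * ‖a‖) * heatKernel d ϰ s a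

/-!
Doubling the time of the heat kernel pays for an exponential weight: by AM-GM,
`c‖a‖ ≤ ϰ s c² + ‖a‖² / (4ϰs)`, so `e^{c‖a‖} p_s(a) ≤ e^{ϰsc²} 2^{d/2} p_{2s}(a)`. For
`c = √(β/(8ϰ))` the factor `e^{ϰsc²} = e^{βs/8}` is absorbed by `e^{-βs/2}`, whence
`Q_s ≤ 2^{d/2} p_{2s}`, and the semigroup property `p_{2s} * p_{2s} = p_{4s}` gives the pointwise
bound. The integrated bound follows by the substitution `t = 4s`.
-/

theorem norm_sub_sq_div_add_norm_sq_div {E : Type*} [NormedAddCommGroup E] [InnerProductSpace ℝ E]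
    {s t : ℝ} (hs : 0 < s) (ht : 0 < t) (a y : E) :
    ‖a - y‖ ^ 2 / s + ‖y‖ ^ 2 / t =
      ‖a‖ ^ 2 / (s + t) + ‖y - (t / (s + t)) • a‖ ^ 2 / (s * t / (s + t)) := by
  rw [norm_sub_sq_real, norm_sub_sq_real, norm_smul, real_inner_smul_right, real_inner_comm a y,
    mul_pow, norm_eq_abs, sq_abs]
  field

section HeatKernel

variable {d : ℕ} {ϰ s t : ℝ}

theorem heatKernel_pos (hϰ : 0 < ϰ) (ht : 0 < t) (z : EuclideanSpace ℝ (Fin d)) :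
    0 < heatKernel d ϰ t z := by
  unfold heatKernel
  positivity

theorem integral_heatKernel (hϰ : 0 < ϰ) (ht : 0 < t) :
    ∫ z, heatKernel d ϰ t z = 1 := by
  have gaussian_form (z : EuclideanSpace ℝ (Fin d)) :
      -‖z‖ ^ 2 / (2 * ϰ * t) = -(1 / (2 * ϰ * t)) * ‖z‖ ^ 2 := by ring
  have base_eq : π / (1 / (2 * ϰ * t)) = 2 * π * ϰ * t := by field
  simp only [heatKernel, gaussian_form]
  rw [integral_const_mul, GaussianFourier.integral_rexp_neg_mul_sq_norm (by positivity),
    finrank_euclideanSpace_fin, base_eq, ← rpow_add (by positivity), neg_div, neg_add_cancel,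
    rpow_zero]

theorem integrable_heatKernel (hϰ : 0 < ϰ) (ht : 0 < t) : Integrable (heatKernel d ϰ t) :=
  .of_integral_ne_zero (by rw [integral_heatKernel hϰ ht]; exact one_ne_zero)

theorem heatKernel_sub_mul_heatKernel (hϰ : 0 < ϰ) (hs : 0 < s) (ht : 0 < t)
    (a y : EuclideanSpace ℝ (Fin d)) :
    heatKernel d ϰ s (a - y) * heatKernel d ϰ t y =
      heatKernel d ϰ (s + t) a *
        heatKernel d ϰ (s * t / (s + t)) (y - (t / (s + t)) • a) := by
  have base_eq : 2 * π * ϰ * s * (2 * π * ϰ * t) =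
      2 * π * ϰ * (s + t) * (2 * π * ϰ * (s * t / (s + t))) := by field
  have exponent_eq : -‖a - y‖ ^ 2 / (2 * ϰ * s) + -‖y‖ ^ 2 / (2 * ϰ * t) =
      -‖a‖ ^ 2 / (2 * ϰ * (s + t)) +
        -‖y - (t / (s + t)) • a‖ ^ 2 / (2 * ϰ * (s * t / (s + t))) := by
    simp only [neg_div, div_mul_eq_div_div_swap _ (2 * ϰ), ← neg_add, ← add_div,
      norm_sub_sq_div_add_norm_sq_div hs ht]
  simp only [heatKernel]
  rw [mul_mul_mul_comm, ← exp_add, ← mul_rpow (by positivity) (by positivity), base_eq,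
    exponent_eq, mul_rpow (by positivity) (by positivity), exp_add, mul_mul_mul_comm]

theorem integrable_heatKernel_sub_mul_heatKernel (hϰ : 0 < ϰ) (hs : 0 < s) (ht : 0 < t)
    (a : EuclideanSpace ℝ (Fin d)) :
    Integrable fun y => heatKernel d ϰ s (a - y) * heatKernel d ϰ t y := by
  simp only [heatKernel_sub_mul_heatKernel hϰ hs ht]
  exact ((integrable_heatKernel hϰ (by positivity)).comp_sub_right _).const_mul _

theorem integral_heatKernel_sub_mul_heatKernel (hϰ : 0 < ϰ) (hs : 0 < s) (ht : 0 < t)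
    (a : EuclideanSpace ℝ (Fin d)) :
    ∫ y, heatKernel d ϰ s (a - y) * heatKernel d ϰ t y = heatKernel d ϰ (s + t) a := by
  simp only [heatKernel_sub_mul_heatKernel hϰ hs ht]
  rw [integral_const_mul, integral_sub_right_eq_self (heatKernel d ϰ (s * t / (s + t))),
    integral_heatKernel hϰ (by positivity), mul_one]

theorem exp_mul_norm_mul_heatKernel_le (hϰ : 0 < ϰ) (hs : 0 < s) (c : ℝ)
    (a : EuclideanSpace ℝ (Fin d)) :
    exp (c * ‖a‖) * heatKernel d ϰ s a ≤
      exp (ϰ * s * c ^ 2) * (2 ^ ((d : ℝ) / 2) * heatKernel d ϰ (2 * s) a) := by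
  have prefactor_eq : (2 : ℝ) ^ ((d : ℝ) / 2) * (2 * π * ϰ * (2 * s)) ^ (-(d : ℝ) / 2) =
      (2 * π * ϰ * s) ^ (-(d : ℝ) / 2) := by
    rw [mul_left_comm _ 2 s, mul_rpow zero_le_two (by positivity), ← mul_assoc,
      ← rpow_add zero_lt_two, neg_div, add_neg_cancel, rpow_zero, one_mul]
  have exponent_le : c * ‖a‖ + -‖a‖ ^ 2 / (2 * ϰ * s) ≤
      ϰ * s * c ^ 2 + -‖a‖ ^ 2 / (2 * ϰ * (2 * s)) := by
    have gap_eq : ϰ * s * c ^ 2 + -‖a‖ ^ 2 / (2 * ϰ * (2 * s)) -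
        (c * ‖a‖ + -‖a‖ ^ 2 / (2 * ϰ * s)) = (‖a‖ - 2 * ϰ * s * c) ^ 2 / (4 * ϰ * s) := by
      field
    rw [← sub_nonneg, gap_eq]
    positivity
  simp only [heatKernel]
  rw [← mul_assoc (2 ^ _), prefactor_eq, mul_left_comm, mul_left_comm (exp (ϰ * s * c ^ 2)),
    ← exp_add, ← exp_add]
  gcongr

end HeatKernel

section Qker

variable {d : ℕ} {ϰ β s : ℝ}

theorem Qker_nonneg (hϰ : 0 < ϰ) (hs : 0 < s) (a : EuclideanSpace ℝ (Fin d)) :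
    0 ≤ Qker d ϰ β s a :=
  mul_nonneg (exp_nonneg _) (heatKernel_pos hϰ hs a).le

theorem Qker_le_heatKernel (hϰ : 0 < ϰ) (hβ : 0 ≤ β) (hs : 0 < s)
    (a : EuclideanSpace ℝ (Fin d)) :
    Qker d ϰ β s a ≤ 2 ^ ((d : ℝ) / 2) * heatKernel d ϰ (2 * s) a := by
  have weight_eq : ϰ * s * √(β / (8 * ϰ)) ^ 2 = β * s / 8 := by
    rw [sq_sqrt (by positivity)]
    field
  have weight_le_one : exp (-(β * s) / 2 + β * s / 8) ≤ 1 :=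
    exp_le_one_iff.2 (by linarith [mul_nonneg hβ hs.le])
  have bound_nonneg : 0 ≤ 2 ^ ((d : ℝ) / 2) * heatKernel d ϰ (2 * s) a :=
    mul_nonneg (by positivity) (heatKernel_pos hϰ (by positivity) a).le
  calc Qker d ϰ β s a
      = exp (-(β * s) / 2) * (exp (√(β / (8 * ϰ)) * ‖a‖) * heatKernel d ϰ s a) := by
        rw [Qker, exp_add, mul_assoc]
    _ ≤ exp (-(β * s) / 2) *
          (exp (β * s / 8) * (2 ^ ((d : ℝ) / 2) * heatKernel d ϰ (2 * s) a)) := by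
        rw [← weight_eq]
        exact mul_le_mul_of_nonneg_left (exp_mul_norm_mul_heatKernel_le hϰ hs _ a) (exp_nonneg _)
    _ ≤ 2 ^ ((d : ℝ) / 2) * heatKernel d ϰ (2 * s) a := by
        rw [← mul_assoc, ← exp_add]
        exact mul_le_of_le_one_left bound_nonneg weight_le_one

theorem integral_Qker_sub_mul_Qker_le (hϰ : 0 < ϰ) (hβ : 0 ≤ β) (hs : 0 < s)
    (a : EuclideanSpace ℝ (Fin d)) :
    ∫ y, Qker d ϰ β s (a - y) * Qker d ϰ β s y ≤ 2 ^ (d : ℝ) * heatKernel d ϰ (4 * s) a := by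
  have h2s : 0 < 2 * s := by positivity
  have integrand_le (y : EuclideanSpace ℝ (Fin d)) :
      Qker d ϰ β s (a - y) * Qker d ϰ β s y ≤
        2 ^ (d : ℝ) * (heatKernel d ϰ (2 * s) (a - y) * heatKernel d ϰ (2 * s) y) := by
    rw [← add_halves (d : ℝ), rpow_add zero_lt_two, ← mul_mul_mul_comm]
    exact mul_le_mul (Qker_le_heatKernel hϰ hβ hs _) (Qker_le_heatKernel hϰ hβ hs _)
      (Qker_nonneg hϰ hs _) ((Qker_nonneg hϰ hs _).trans (Qker_le_heatKernel hϰ hβ hs _))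
  calc ∫ y, Qker d ϰ β s (a - y) * Qker d ϰ β s y
      ≤ ∫ y, 2 ^ (d : ℝ) * (heatKernel d ϰ (2 * s) (a - y) * heatKernel d ϰ (2 * s) y) :=
        integral_mono_of_nonneg
          (.of_forall fun _ => mul_nonneg (Qker_nonneg hϰ hs _) (Qker_nonneg hϰ hs _))
          ((integrable_heatKernel_sub_mul_heatKernel hϰ h2s h2s a).const_mul _)
          (.of_forall integrand_le)
    _ = 2 ^ (d : ℝ) * heatKernel d ϰ (4 * s) a := by
        rw [integral_const_mul, integral_heatKernel_sub_mul_heatKernel hϰ h2s h2s]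
        ring_nf

end Qker

theorem setLIntegral_Ioi_comp_mul_left {k : ℝ} (hk : 0 < k) (a : ℝ) (g : ℝ → ℝ≥0∞) :
    ∫⁻ s in Set.Ioi a, g (k * s) = (ENNReal.ofReal k)⁻¹ * ∫⁻ t in Set.Ioi (k * a), g t := by
  have change_of_variables := lintegral_image_eq_lintegral_abs_deriv_mul
    (measurableSet_Ioi (a := a)) (fun x _ => (hasDerivAt_const_mul k (x := x)).hasDerivWithinAt)
    (mul_right_injective₀ hk.ne').injOn g
  rw [Set.image_mul_left_Ioi hk, abs_of_pos hk,
    lintegral_const_mul' _ _ ENNReal.ofReal_ne_top] at change_of_variables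
  rw [change_of_variables, ← mul_assoc,
    ENNReal.inv_mul_cancel (ENNReal.ofReal_pos.2 hk).ne' ENNReal.ofReal_ne_top, one_mul]

theorem setLIntegral_Ioi_mul_lintegral_le_of_le_comp_mul_left {X : Type*} [MeasurableSpace X]
    {μ : Measure X} {K P : ℝ → X → ℝ≥0∞} {C : ℝ≥0∞} (hC : C ≠ ∞) {k : ℝ} (hk : 0 < k)
    (hKP : ∀ s > 0, ∀ x, K s x ≤ C * P (k * s) x) (w : ℝ → ℝ≥0∞) (f : X → ℝ≥0∞) :
    ∫⁻ s in Set.Ioi 0, w (k * s) * ∫⁻ x, K s x * f x ∂μ ≤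
      C * (ENNReal.ofReal k)⁻¹ * ∫⁻ t in Set.Ioi 0, w t * ∫⁻ x, P t x * f x ∂μ := by
  have inner_le (s : ℝ) (hs : 0 < s) :
      ∫⁻ x, K s x * f x ∂μ ≤ C * ∫⁻ x, P (k * s) x * f x ∂μ := by
    rw [← lintegral_const_mul' _ _ hC]
    refine lintegral_mono fun x => ?_
    rw [← mul_assoc]
    gcongr
    exact hKP s hs x
  calc ∫⁻ s in Set.Ioi 0, w (k * s) * ∫⁻ x, K s x * f x ∂μ
      ≤ ∫⁻ s in Set.Ioi 0, C * (w (k * s) * ∫⁻ x, P (k * s) x * f x ∂μ) := by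
        refine setLIntegral_mono' measurableSet_Ioi fun s hs => ?_
        rw [mul_left_comm]
        gcongr
        exact inner_le s hs
    _ = C * (ENNReal.ofReal k)⁻¹ * ∫⁻ t in Set.Ioi 0, w t * ∫⁻ x, P t x * f x ∂μ := by
        rw [lintegral_const_mul' _ _ hC,
          setLIntegral_Ioi_comp_mul_left hk 0 fun t => w t * ∫⁻ x, P t x * f x ∂μ,
          mul_zero, mul_assoc]

/-- `(Q_s*Q_s)(a) ≤ 2^d p_{4s}(a)` for all `s > 0`, `a ∈ ℝ^d`; consequently,
for every measurable `f : ℝ^d → [0,∞]`,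
`∫_0^∞ e^{-βs} (Q_s*Q_s*f)(0) ds ≤ 2^{d-2} ∫_0^∞ e^{-βt/4} (p_t*f)(0) dt`. -/
theorem stmt8 (d : ℕ) (hd : 1 ≤ d) (ϰ β : ℝ) (hϰ : 0 < ϰ) (hβ : 0 < β) :
    (∀ s > (0:ℝ), ∀ a : EuclideanSpace ℝ (Fin d),
      (∫ y, Qker d ϰ β s (a - y) * Qker d ϰ β s y) ≤
        2 ^ (d : ℝ) * heatKernel d ϰ (4 * s) a) ∧
    ∀ f : EuclideanSpace ℝ (Fin d) → ℝ≥0∞, Measurable f →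
      (∫⁻ s in Set.Ioi (0:ℝ), ENNReal.ofReal (Real.exp (-(β * s))) *
          ∫⁻ z, ENNReal.ofReal (∫ y, Qker d ϰ β s (-z - y) * Qker d ϰ β s y) * f z) ≤
        ENNReal.ofReal (2 ^ ((d : ℝ) - 2)) *
          ∫⁻ t in Set.Ioi (0:ℝ), ENNReal.ofReal (Real.exp (-(β * t) / 4)) *
            ∫⁻ x, ENNReal.ofReal (heatKernel d ϰ t (-x)) * f x := by
  have conv_le (s : ℝ) (hs : s > 0) (a : EuclideanSpace ℝ (Fin d)) :=
    integral_Qker_sub_mul_Qker_le hϰ hβ.le hs a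
  refine ⟨conv_le, fun f _ => ?_⟩
  have ofReal_conv_le (s : ℝ) (hs : s > 0) (z : EuclideanSpace ℝ (Fin d)) :
      ENNReal.ofReal (∫ y, Qker d ϰ β s (-z - y) * Qker d ϰ β s y) ≤
        ENNReal.ofReal (2 ^ (d : ℝ)) * ENNReal.ofReal (heatKernel d ϰ (4 * s) (-z)) := by
    rw [← ENNReal.ofReal_mul (by positivity)]
    exact ENNReal.ofReal_le_ofReal (conv_le s hs (-z))
  have const_eq : ENNReal.ofReal (2 ^ (d : ℝ)) * (ENNReal.ofReal 4)⁻¹ =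
      ENNReal.ofReal (2 ^ ((d : ℝ) - 2)) := by
    rw [← div_eq_mul_inv, ← ENNReal.ofReal_div_of_pos four_pos, rpow_sub two_pos]
    norm_num
  have weight_eq (s : ℝ) : -(β * (4 * s)) / 4 = -(β * s) := by ring
  simpa only [weight_eq, const_eq] using
    setLIntegral_Ioi_mul_lintegral_le_of_le_comp_mul_left
      (P := fun t z => ENNReal.ofReal (heatKernel d ϰ t (-z))) ENNReal.ofReal_ne_top four_pos
      ofReal_conv_le (fun t => ENNReal.ofReal (exp (-(β * t) / 4))) f
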